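/- arXiv:1707.06520 — 4 statements merged into one kernel-verified Lean document; each statement's English description precedes it below -/
import Mathlib

section
/- Let n ≥ 2 be a natural number and let G be the (n−1)×(n−1) matrix over K whose diagonal entries are all equal to q + q^{−1}, whose entries immediately above and immediately below the diagonal are all equal to 1, and whose remaining entries are 0 (the Gram matrix of the Temperley–Lieb cell module of b_n with n−2 propagating lines, in the half-diagram basis, with parameter δ = [2]). Then det G = [n]. -/
/-- The quantum integer `[m] = (q^m - q^{-m})/(q - q⁻¹)`. -/
noncomputable def qint {K : Type*} [Field K] (q : K) (m : ℤ) : K :=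
  (q ^ m - q ^ (-m)) / (q - q⁻¹)

def tlG {K : Type*} [Field K] (d : K) (m : ℕ) : Matrix (Fin m) (Fin m) K :=
  fun i j => if (i : ℕ) = (j : ℕ) then d
      else if (i : ℕ) + 1 = (j : ℕ) ∨ (j : ℕ) + 1 = (i : ℕ) then 1
      else 0

theorem tlG_rec {K : Type*} [Field K] (d : K) (m : ℕ) :
    (tlG d (m+2)).det = d * (tlG d (m+1)).det - (tlG d m).det := by
  have h1 : (tlG d (m+2)).submatrix Fin.succ (Fin.succAbove 0) = tlG d (m+1) := by
    ext i j
    simp [tlG]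
  have h2 : ((tlG d (m+2)).submatrix Fin.succ (Fin.succAbove (Fin.succ 0))).det
      = (tlG d m).det := by
    rw [Matrix.det_succ_column_zero, Fin.sum_univ_succ, Finset.sum_eq_zero]
    · have h3 : ((tlG d (m+2)).submatrix Fin.succ (Fin.succAbove (Fin.succ 0))).submatrix
          (Fin.succAbove 0) Fin.succ = tlG d m := by
        ext i j
        simp [tlG]
      rw [h3]
      simp [tlG]
    · intro i _
      simp [tlG]
  rw [Matrix.det_succ_row_zero, Fin.sum_univ_succ, Fin.sum_univ_succ, Finset.sum_eq_zero, h1, h2]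
  · simp [tlG]
    ring
  · intro i _
    simp [tlG]

theorem tlG_det {K : Type*} [Field K] (q : K) (hq : q ≠ 0) (hq2 : q ^ 2 ≠ 1) (m : ℕ) :
    (tlG (q + q⁻¹) m).det * (q - q⁻¹) = q ^ (m+1) - (q⁻¹) ^ (m+1) := by
  induction m using Nat.twoStepInduction with
  | zero => simp
  | one => simp [tlG]; ring
  | more m h0 h1 =>
    have h : q * q⁻¹ = 1 := mul_inv_cancel₀ hq
    rw [tlG_rec]
    generalize q⁻¹ = r at *
    linear_combination (q + r) * h1 - h0 + (q^(m+1) - r^(m+1)) * h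

/-- Let `n ≥ 2` and let `G` be the `(n-1)×(n-1)` tridiagonal matrix with diagonal entries
`q + q⁻¹`, sub/super-diagonal entries `1` and remaining entries `0` (the Gram matrix of the
Temperley–Lieb cell module of `b_n` with `n-2` propagating lines, with `δ = [2]`).
Then `det G = [n]`. -/
theorem tl_gram_det {K : Type*} [Field K] (q : K) (hq : q ≠ 0) (hq2 : q ^ 2 ≠ 1)
    (n : ℕ) (hn : 2 ≤ n)
    (G : Matrix (Fin (n - 1)) (Fin (n - 1)) K)
    (hG : ∀ i j : Fin (n - 1), G i j =
      if (i : ℕ) = (j : ℕ) then q + q⁻¹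
      else if (i : ℕ) + 1 = (j : ℕ) ∨ (j : ℕ) + 1 = (i : ℕ) then 1
      else 0) :
    G.det = qint q n := by
  obtain ⟨m, rfl⟩ : ∃ m, n = m + 1 := ⟨n - 1, by omega⟩
  have hG' : G = tlG (q + q⁻¹) (m + 1 - 1) := by
    ext i j
    exact hG i j
  have hne : q - q⁻¹ ≠ 0 := by
    intro h
    apply hq2
    have h' : q * q⁻¹ = 1 := mul_inv_cancel₀ hq
    linear_combination q * h + h'
  have key := tlG_det q hq hq2 m
  rw [hG', qint, eq_div_iff hne, zpow_neg, zpow_natCast, ← inv_pow]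
  exact key
end

section
/- Let Q be a nonzero element of K with [w+1] ≠ 0, and set κ = [w]/[w+1] and δ = q + q^{−1}. For n ≥ 2 let M be the n×n matrix over K, with rows and columns indexed by 0,…,n−1, defined by: M₀₀ = M₀₁ = M₁₀ = κ; M_{ii} = δ for 1 ≤ i ≤ n−1; M_{i,i+1} = M_{i+1,i} = 1 for 1 ≤ i ≤ n−2; and all other entries 0 (the Gram matrix M^b_n(n−2) of the blob algebra cell module W_{n−2}(n) with the blob generator normalised to be idempotent). Then det M = [w]·[w+n]/[w+1]². -/
/-- The shifted quantum bracket `[w+m] = (Q·q^m - Q⁻¹·q^{-m})/(q - q⁻¹)`,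
where `Q` is thought of as `q^w` for a formal exponent `w`. -/
noncomputable def qbr {K : Type*} [Field K] (q Q : K) (m : ℤ) : K :=
  (Q * q ^ m - Q⁻¹ * q ^ (-m)) / (q - q⁻¹)

lemma tri_det {K : Type*} [Field K] (g : ℕ → ℕ → K)
    (h1 : ∀ i j, i + 1 < j → g i j = 0) (h2 : ∀ i j, j + 1 < i → g i j = 0) (n : ℕ) :
    (Matrix.of fun i j : Fin (n+2) => g i j).det =
      g (n+1) (n+1) * (Matrix.of fun i j : Fin (n+1) => g i j).det
      - g (n+1) n * g n (n+1) * (Matrix.of fun i j : Fin n => g i j).det := by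
  have key : ((Matrix.of fun i j : Fin (n+2) => g i j).submatrix (Fin.last (n+1)).succAbove
      (Fin.last n).castSucc.succAbove).det =
      g n (n+1) * (Matrix.of fun i j : Fin n => g i j).det := by
    rw [Matrix.det_succ_column _ (Fin.last n), Fin.sum_univ_castSucc, Finset.sum_eq_zero]
    · have : ((Matrix.of fun i j : Fin (n+2) => g i j).submatrix (Fin.last (n+1)).succAbove
        (Fin.last n).castSucc.succAbove).submatrix (Fin.last n).succAbove (Fin.last n).succAbove
          = (Matrix.of fun i j : Fin n => g i j) := by
        ext i j
        have : (Fin.last n).castSucc.succAbove j.castSucc = j.castSucc.castSucc := by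
          rw [Fin.succAbove_of_castSucc_lt]
          simp [Fin.lt_def]
        simp [this]
      rw [this]
      have h3 : (Fin.last n).castSucc.succAbove (Fin.last n) = Fin.last (n+1) := by
        rw [Fin.succAbove_of_le_castSucc] <;> simp
      simp [h3, ← two_mul]
    · intro i _
      have h3 : (Fin.last n).castSucc.succAbove (Fin.last n) = Fin.last (n+1) := by
        rw [Fin.succAbove_of_le_castSucc] <;> simp
      have : g i (n+1) = 0 := h1 _ _ (by have := i.2; omega)
      simp [h3, this]
  rw [Matrix.det_succ_row _ (Fin.last (n+1)), Fin.sum_univ_castSucc, Fin.sum_univ_castSucc,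
    Finset.sum_eq_zero, key]
  · have : ((Matrix.of fun i j : Fin (n+2) => g i j).submatrix (Fin.last (n+1)).succAbove
        (Fin.last (n+1)).succAbove) = (Matrix.of fun i j : Fin (n+1) => g i j) := by
      ext i j
      simp
    rw [this]
    have e1 : (-1:K)^(n+1+n) = -1 := Odd.neg_one_pow ⟨n, by ring⟩
    have e2 : (-1:K)^(n+1+(n+1)) = 1 := Even.neg_one_pow ⟨n+1, by ring⟩
    simp [e1, e2]
    ring
  · intro i _
    have : g (n+1) i = 0 := h2 _ _ (by have := i.2; omega)
    simp [this]

lemma qbr_rec {K : Type*} [Field K] (q Q : K) (hq : q ≠ 0) (m : ℤ) :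
    qbr q Q (m+2) = (q + q⁻¹) * qbr q Q (m+1) - qbr q Q m := by
  unfold qbr
  have a1 : q ^ (m+2) = q^m * q^2 := by rw [zpow_add₀ hq]; norm_cast
  have a2 : q ^ (-(m+2)) = q^(-m) * (q⁻¹)^2 := by
    rw [neg_add, zpow_add₀ hq, zpow_neg q 2, inv_pow]; norm_cast
  have a3 : q ^ (m+1) = q^m * q := by rw [zpow_add₀ hq]; simp
  have a4 : q ^ (-(m+1)) = q^(-m) * q⁻¹ := by
    rw [neg_add, zpow_add₀ hq]; simp
  rw [a1, a2, a3, a4, mul_div_assoc', ← sub_div]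
  congr 1
  have : q * q⁻¹ = 1 := mul_inv_cancel₀ hq
  linear_combination (-Q * q^m + Q⁻¹ * q^(-m)) * this

/-- Let `κ = [w]/[w+1]`, `δ = q + q⁻¹`, and for `n ≥ 2` let `M` be the `n×n` matrix with
`M₀₀ = M₀₁ = M₁₀ = κ`, diagonal entries `δ` for `1 ≤ i ≤ n-1`, entries `1` at `(i,i+1)` and
`(i+1,i)` for `1 ≤ i ≤ n-2`, and `0` elsewhere (the Gram matrix `M^b_n(n-2)` of the blob
algebra cell module `W_{n-2}(n)`). Then `det M = [w]·[w+n]/[w+1]²`. -/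
theorem blob_gram_det_plus {K : Type*} [Field K] (q : K) (hq : q ≠ 0) (hq2 : q ^ 2 ≠ 1)
    (Q : K) (hQ : Q ≠ 0) (hw1 : qbr q Q 1 ≠ 0)
    (κ δ : K) (hκ : κ = qbr q Q 0 / qbr q Q 1) (hδ : δ = q + q⁻¹)
    (n : ℕ) (hn : 2 ≤ n)
    (M : Matrix (Fin n) (Fin n) K)
    (hM : ∀ i j : Fin n, M i j =
      if ((i : ℕ) = 0 ∧ (j : ℕ) = 0) ∨ ((i : ℕ) = 0 ∧ (j : ℕ) = 1) ∨
          ((i : ℕ) = 1 ∧ (j : ℕ) = 0) then κ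
      else if (i : ℕ) = (j : ℕ) then δ
      else if (i : ℕ) + 1 = (j : ℕ) ∨ (j : ℕ) + 1 = (i : ℕ) then 1
      else 0) :
    M.det = qbr q Q 0 * qbr q Q n / (qbr q Q 1) ^ 2 := by
  obtain ⟨n, rfl⟩ : ∃ k, n = k + 1 := ⟨n - 1, by omega⟩
  let g : ℕ → ℕ → K := fun i j =>
      if (i = 0 ∧ j = 0) ∨ (i = 0 ∧ j = 1) ∨ (i = 1 ∧ j = 0) then κ
      else if i = j then δ
      else if i + 1 = j ∨ j + 1 = i then 1
      else 0
  have hMg : M = Matrix.of fun i j : Fin (n+1) => g i j := by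
    ext i j
    rw [hM]; rfl
  have T := tri_det g
    (fun i j h => by
      simp only [g]; rw [if_neg (by omega), if_neg (by omega), if_neg (by omega)])
    (fun i j h => by
      simp only [g]; rw [if_neg (by omega), if_neg (by omega), if_neg (by omega)])
  have D1 : (Matrix.of fun i j : Fin (0+1) => g i j).det = κ := by
    simp [g]
  have main : ∀ m : ℕ,
      (Matrix.of fun i j : Fin (m+1) => g i j).det
        = qbr q Q 0 * qbr q Q ((m:ℤ)+1) / (qbr q Q 1) ^ 2 ∧
      (Matrix.of fun i j : Fin (m+2) => g i j).det
        = qbr q Q 0 * qbr q Q ((m:ℤ)+2) / (qbr q Q 1) ^ 2 := by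
    intro m
    induction m with
    | zero =>
      constructor
      · rw [D1, hκ]; simp; field_simp
      · have r := qbr_rec q Q hq 0
        rw [T 0, D1]
        simp only [Nat.cast_zero, r]
        simp [g]
        rw [hκ, hδ]
        field_simp
    | succ m ih =>
      obtain ⟨i1, i2⟩ := ih
      refine ⟨?_, ?_⟩
      · rw [i2]; push_cast; ring_nf
      · have r := qbr_rec q Q hq ((m:ℤ)+1)
        have g1 : g (m+1+1) (m+1+1) = δ := by simp [g]
        have g2 : g (m+1+1) (m+1) = 1 := by simp [g]
        have g3 : g (m+1) (m+1+1) = 1 := by simp [g]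
        rw [T (m+1), g1, g2, g3, i1, i2, hδ]
        push_cast
        rw [r, show (m:ℤ)+1+1 = m+2 by ring]
        ring
  rw [hMg, (main n).1]
  push_cast
  rfl
end

section
/- For all integers F, G and every nonzero element Q of K (representing a formal exponent Kₑ), the following identity holds in K: −(q+q^{−1})·[F+1]·[G+1]·[Kₑ−G−1] + [F+1]·[Kₑ] + [F+1]·[G]·[Kₑ−G−1] + [F]·[G+1]·[Kₑ−G−1] + [G+1]·[Kₑ−F−G−2] = 0, where for an integer m the shifted bracket [Kₑ+m] := (Q·q^m − Q^{−1}·q^{−m})/(q − q^{−1}). (This is the vanishing of the coefficient C_D for the undecorated diagram of Figure cdzerolines.) -/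
/-- For all integers `F, G` and nonzero `Q = q^{Kₑ}`:
`-(q+q⁻¹)·[F+1]·[G+1]·[Kₑ-G-1] + [F+1]·[Kₑ] + [F+1]·[G]·[Kₑ-G-1]
  + [F]·[G+1]·[Kₑ-G-1] + [G+1]·[Kₑ-F-G-2] = 0`
(the vanishing of the coefficient `C_D` for the undecorated diagram of Figure
`cdzerolines`). -/
theorem cdzerolines_identity {K : Type*} [Field K] (q : K) (hq : q ≠ 0) (hq2 : q ^ 2 ≠ 1)
    (F G : ℤ) (Q : K) (hQ : Q ≠ 0) :
    -(q + q⁻¹) * qint q (F + 1) * qint q (G + 1) * qbr q Q (-G - 1) +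
      qint q (F + 1) * qbr q Q 0 +
      qint q (F + 1) * qint q G * qbr q Q (-G - 1) +
      qint q F * qint q (G + 1) * qbr q Q (-G - 1) +
      qint q (G + 1) * qbr q Q (-F - G - 2) = 0 := by
  have hd : q ^ 2 - 1 ≠ 0 := sub_ne_zero.mpr hq2
  have ha : q ^ F ≠ 0 := zpow_ne_zero _ hq
  have hb : q ^ G ≠ 0 := zpow_ne_zero _ hq
  have hdd : q - q⁻¹ = (q ^ 2 - 1) / q := by field_simp
  have e1 : q ^ (F + 1) = q ^ F * q := zpow_add_one₀ hq F
  have e2 : q ^ (G + 1) = q ^ G * q := zpow_add_one₀ hq G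
  have e3 : q ^ (-G - 1) = (q ^ G * q)⁻¹ := by
    rw [← e2, ← zpow_neg]; congr 1; ring
  have e4 : q ^ (F + G + 2) = q ^ F * q ^ G * q ^ 2 := by
    rw [zpow_add₀ hq, zpow_add₀ hq]; norm_cast
  have e5 : q ^ (-F - G - 2) = (q ^ F * q ^ G * q ^ 2)⁻¹ := by
    rw [← e4, ← zpow_neg]; congr 1; ring
  unfold qint qbr
  simp only [zpow_neg, e1, e2, e3, e5, hdd, neg_zero, zpow_zero, inv_one]
  generalize q ^ F = a at *
  generalize q ^ G = b at *
  field_simp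
  ring
end

section
/- Let l ≥ 2 be an integer with q^l = −1. Then for every integer A and every nonzero element Q₁ of K (representing a formal exponent w₁), the following identity holds in K: [w₁+1]·[l−A] + [A]·[w₁−l+1] = 0, where [w₁+m] := (Q₁·q^m − Q₁^{−1}·q^{−m})/(q − q^{−1}). (This is the vanishing of the coefficient C_D in Case 2 of the proof of the fourth family of homomorphisms.) -/
/-- Let `l ≥ 2` with `q^l = -1`. Then for every integer `A` and nonzero `Q₁ = q^{w₁}`:
`[w₁+1]·[l-A] + [A]·[w₁-l+1] = 0` (the vanishing of the coefficient `C_D` in Case 2 of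
the proof of the fourth family of homomorphisms). -/
theorem case2_vanishing {K : Type*} [Field K] (q : K) (hq : q ≠ 0) (hq2 : q ^ 2 ≠ 1)
    (l : ℤ) (hl : 2 ≤ l) (hql : q ^ l = -1) :
    ∀ (A : ℤ) (Q₁ : K), Q₁ ≠ 0 →
      qbr q Q₁ 1 * qint q (l - A) + qint q A * qbr q Q₁ (1 - l) = 0 := by
  intro A Q₁ _
  have e1 : q ^ (l - A) = -q ^ (-A) := by
    rw [sub_eq_add_neg, zpow_add₀ hq, hql]; ring
  have hnl : q ^ (-l) = -1 := by rw [zpow_neg, hql]; norm_num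
  have e2 : q ^ (-(l - A)) = -q ^ A := by
    rw [show -(l - A) = -l + A by ring, zpow_add₀ hq, hnl]; ring
  have e3 : q ^ (1 - l) = -q ^ (1 : ℤ) := by
    rw [sub_eq_add_neg, zpow_add₀ hq, hnl]; ring
  have e4 : q ^ (-(1 - l)) = -q ^ (-1 : ℤ) := by
    rw [show -(1 - l) = l + -1 by ring, zpow_add₀ hq, hql]; ring
  unfold qbr qint
  rw [e1, e2, e3, e4]
  ring
end
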